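/- arXiv:1205.2133 — 4 statements merged into one kernel-verified Lean document; each statement's English description precedes it below -/
import Mathlib

section
/- Let A : ℝ → Matrix (Fin n) (Fin n) ℝ be continuous and let Φ : ℝ → Matrix (Fin n) (Fin n) ℝ satisfy Φ'(t) = A(t) · Φ(t) for all t (in the sense that each entry function is differentiable with the stated derivative). If Φ(t₀) is invertible for some t₀ ∈ ℝ, then Φ(t) is invertible for every t ∈ ℝ. -/
section
attribute [local instance] Matrix.linftyOpNormedAddCommGroup

lemma aux_lip (n : ℕ) (A : ℝ → Matrix (Fin n) (Fin n) ℝ) (hA : Continuous A) (a b : ℝ) :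
    ∃ K : NNReal, ∀ t ∈ Set.Ioo a b,
      LipschitzOnWith K (fun x : Fin n → ℝ => (A t).mulVec x) Set.univ := by
  have hc : Continuous fun t => ‖A t‖ := continuous_norm.comp hA
  obtain ⟨C, hC⟩ := (isCompact_Icc (a := a) (b := b)).bddAbove_image hc.continuousOn
  refine ⟨C.toNNReal, fun t ht => LipschitzOnWith.of_dist_le_mul fun x _ y _ => ?_⟩
  rw [dist_eq_norm, dist_eq_norm, ← Matrix.mulVec_sub]
  refine (Matrix.linfty_opNorm_mulVec _ _).trans ?_
  gcongr
  exact (hC ⟨t, Set.Ioo_subset_Icc_self ht, rfl⟩).trans (Real.le_coe_toNNReal C)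

end

/-- If `Φ` solves the matrix ODE `Φ̇ = A(t)Φ` (entrywise) with `A` continuous, and `Φ(t₀)`
is invertible for some `t₀`, then `Φ(t)` is invertible for every `t`. -/
theorem stmt_0 (n : ℕ) (A Φ : ℝ → Matrix (Fin n) (Fin n) ℝ)
    (hA : Continuous A)
    (hΦ : ∀ t i j, HasDerivAt (fun s => Φ s i j) ((A t * Φ t) i j) t)
    (t₀ : ℝ) (h : IsUnit (Φ t₀)) :
    ∀ t, IsUnit (Φ t) := by
  intro t
  rw [Matrix.isUnit_iff_isUnit_det, isUnit_iff_ne_zero]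
  intro hdet
  obtain ⟨v, hv, hv0⟩ := Matrix.exists_mulVec_eq_zero_iff.mpr hdet
  obtain ⟨a, b, Ht, Ht₀⟩ : ∃ a b, t ∈ Set.Ioo a b ∧ t₀ ∈ Set.Ioo a b := by
    use (min (-|t|) (-|t₀|) - 1), (max |t| |t₀| + 1)
    grind
  obtain ⟨K, hK⟩ := aux_lip n A hA a b
  have hd : ∀ s, HasDerivAt (fun s => (Φ s).mulVec v) ((A s).mulVec ((Φ s).mulVec v)) s := by
    intro s
    rw [hasDerivAt_pi]
    intro i
    rw [Matrix.mulVec_mulVec]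
    simp only [Matrix.mulVec, dotProduct]
    exact HasDerivAt.fun_sum fun j _ => (hΦ s i j).mul_const (v j)
  have := ODE_solution_unique_of_mem_Ioo (v := fun s x => (A s).mulVec x)
    (f := fun s => (Φ s).mulVec v) (g := fun _ => 0) hK Ht
    (fun s _ => ⟨hd s, trivial⟩)
    (fun s _ => ⟨by simpa using hasDerivAt_const s (0 : Fin n → ℝ), trivial⟩) hv0 Ht₀
  exact hv (Matrix.mulVec_injective_iff_isUnit.mpr h (by simpa using this))
end

section
/- Let A : ℝ → Matrix (Fin n) (Fin n) ℝ and f : ℝ → (Fin n → ℝ) be continuous, let Φ : ℝ → Matrix (Fin n) (Fin n) ℝ satisfy Φ̇(t) = A(t)Φ(t) with Φ(t) invertible for all t, let m ≥ 1, let t₁, …, t_m ∈ [0,1], and let Φ₁, …, Φ_m : ℝ → Matrix (Fin n) (Fin n) ℝ satisfy Φ̇_k(t) = A(t)Φ_k(t) for each k and Σ_{k=1}^{m} Φ_k(t) = Φ(t) for all t. Then for any constant vector C, the function x(t) = Φ(t)·C + Σ_{k=1}^{m} Φ_k(t) · ∫_{t_k}^{t} Φ(s)⁻¹ f(s) ds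 satisfies ẋ(t) = A(t) x(t) + f(t) for all t. -/
open scoped Matrix

theorem hasDerivAt_mulVec_aux {n : ℕ} {M : ℝ → Matrix (Fin n) (Fin n) ℝ}
    {M' : Matrix (Fin n) (Fin n) ℝ} {v : ℝ → Fin n → ℝ} {v' : Fin n → ℝ} {t : ℝ}
    (hM : ∀ i j, HasDerivAt (fun s => M s i j) (M' i j) t) (hv : HasDerivAt v v' t) :
    HasDerivAt (fun s => M s *ᵥ v s) (M' *ᵥ v t + M t *ᵥ v') t := by
  rw [hasDerivAt_pi] at hv ⊢
  intro i
  simp only [Matrix.mulVec, dotProduct, Pi.add_apply, ← Finset.sum_add_distrib]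
  exact HasDerivAt.fun_sum fun j _ => (hM i j).fun_mul (hv j)

/-- If `Φ` is a fundamental matrix for `ẋ = A(t)x` with a splitting `Φ₁, …, Φ_m`
(each `Φ_k` solves `Φ̇_k = A(t)Φ_k` and `Σ_k Φ_k = Φ`), then for any constant vector `C`,
`x(t) = Φ(t)C + Σ_k Φ_k(t) ∫_{t_k}^{t} Φ(s)⁻¹ f(s) ds` solves `ẋ = A(t)x + f(t)`. -/
theorem stmt_3 (n m : ℕ) (hm : 1 ≤ m)
    (A : ℝ → Matrix (Fin n) (Fin n) ℝ) (f : ℝ → Fin n → ℝ)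
    (hA : Continuous A) (hf : Continuous f)
    (Φ : ℝ → Matrix (Fin n) (Fin n) ℝ)
    (hΦ : ∀ t i j, HasDerivAt (fun s => Φ s i j) ((A t * Φ t) i j) t)
    (hinv : ∀ t, IsUnit (Φ t))
    (ts : Fin m → ℝ) (hts : ∀ k, ts k ∈ Set.Icc (0 : ℝ) 1)
    (Φk : Fin m → ℝ → Matrix (Fin n) (Fin n) ℝ)
    (hΦk : ∀ k t i j, HasDerivAt (fun s => Φk k s i j) ((A t * Φk k t) i j) t)
    (hsum : ∀ t, ∑ k, Φk k t = Φ t)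
    (C : Fin n → ℝ) :
    ∀ t, HasDerivAt
      (fun s => Φ s *ᵥ C + ∑ k, Φk k s *ᵥ ∫ u in ts k..s, (Φ u)⁻¹ *ᵥ f u)
      (A t *ᵥ (Φ t *ᵥ C + ∑ k, Φk k t *ᵥ ∫ u in ts k..t, (Φ u)⁻¹ *ᵥ f u) + f t) t := by
  intro t
  have hΦc : Continuous Φ := continuous_matrix fun i j =>
    continuous_iff_continuousAt.2 fun s => (hΦ s i j).continuousAt
  have hdet : ∀ s, IsUnit (Φ s).det := fun s => (Matrix.isUnit_iff_isUnit_det _).1 (hinv s)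
  have hinvc : Continuous fun u => (Φ u)⁻¹ := by
    simp only [Matrix.inv_def, Ring.inverse_eq_inv']
    exact (hΦc.matrix_det.inv₀ fun s => (hdet s).ne_zero).smul hΦc.matrix_adjugate
  have hg : Continuous fun u => (Φ u)⁻¹ *ᵥ f u := hinvc.matrix_mulVec hf
  have h1 := hasDerivAt_mulVec_aux (hΦ t) (hasDerivAt_const t C)
  have h2 : ∀ k, HasDerivAt (fun s => Φk k s *ᵥ ∫ u in ts k..s, (Φ u)⁻¹ *ᵥ f u) _ t := fun k =>
    hasDerivAt_mulVec_aux (hΦk k t) (hg.integral_hasStrictDerivAt (ts k) t).hasDerivAt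
  have h3 := h1.fun_add (HasDerivAt.fun_sum (u := Finset.univ) fun k _ => h2 k)
  refine h3.congr_deriv ?_
  rw [Finset.sum_add_distrib, ← Matrix.sum_mulVec, hsum, Matrix.mulVec_mulVec,
    Matrix.mul_nonsing_inv _ (hdet t), Matrix.one_mulVec, Matrix.mulVec_zero, add_zero,
    Matrix.mulVec_add, Matrix.mulVec_sum, Matrix.mulVec_mulVec, add_assoc]
  simp only [Matrix.mulVec_mulVec]
end

section
/- (Theorem 1, uniqueness part.) Let A : ℝ → Matrix (Fin n) (Fin n) ℝ and f : ℝ → (Fin n → ℝ) be continuous, let 0 = t₁ < t₂ < … < t_m = 1 be points of [0,1] with 2 ≤ m, let F₁, …, F_m be constant n×n real matrices, let Φ be a fundamental matrix (Φ̇ = A(t)Φ, Φ(t) invertible for all t), and suppose the matrix F = Σ_{j=1}^{m} F_j Φ(t_j) is invertible. If x and y both satisfy ẋ(t) = A(t)x(t) + f(t) for all t and the boundary condition Σ_{j=1}^{m} F_j x(t_j) = α, then x = y. -/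
open scoped Matrix

theorem det_diff_aux {n : ℕ} (M : ℝ → Matrix (Fin n) (Fin n) ℝ)
    (h : ∀ i j, Differentiable ℝ (fun s => M s i j)) :
    Differentiable ℝ (fun s => (M s).det) := by
  simp only [Matrix.det_apply']
  refine Differentiable.fun_sum fun σ _ => ?_
  refine (differentiable_const _).mul ?_
  exact Differentiable.fun_finsetProd fun i _ => h _ _

theorem inv_diff_aux {n : ℕ} (M : ℝ → Matrix (Fin n) (Fin n) ℝ)
    (h : ∀ i j, Differentiable ℝ (fun s => M s i j)) (hu : ∀ t, IsUnit (M t)) (i j : Fin n) :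
    Differentiable ℝ (fun s => (M s)⁻¹ i j) := by
  have hd : ∀ t, (M t).det ≠ 0 := fun t => ((Matrix.isUnit_iff_isUnit_det _).1 (hu t)).ne_zero
  simp only [Matrix.inv_def, Ring.inverse_eq_inv', Matrix.smul_apply, smul_eq_mul,
    Matrix.adjugate_apply]
  refine ((det_diff_aux M h).inv hd).mul (det_diff_aux _ fun a b => ?_)
  by_cases hab : a = j
  · subst hab
    simp
  · simpa [Matrix.updateRow_ne hab] using h a b

/-- Theorem 1 (uniqueness part): under the condition `det F ≠ 0` with
`F = Σ_j F_j Φ(t_j)`, the many-point boundary value problem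
`ẋ = A(t)x + f(t)`, `Σ_j F_j x(t_j) = α` has at most one solution. -/
theorem stmt_6 (n m : ℕ) (hm : 2 ≤ m)
    (A : ℝ → Matrix (Fin n) (Fin n) ℝ) (f : ℝ → Fin n → ℝ)
    (hA : Continuous A) (hf : Continuous f)
    (ts : Fin m → ℝ) (hmono : StrictMono ts)
    (h0 : ts ⟨0, by omega⟩ = 0) (h1 : ts ⟨m - 1, by omega⟩ = 1)
    (F : Fin m → Matrix (Fin n) (Fin n) ℝ)
    (Φ : ℝ → Matrix (Fin n) (Fin n) ℝ)
    (hΦ : ∀ t i j, HasDerivAt (fun s => Φ s i j) ((A t * Φ t) i j) t)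
    (hinv : ∀ t, IsUnit (Φ t))
    (hF : IsUnit (∑ j, F j * Φ (ts j)))
    (α : Fin n → ℝ) (x y : ℝ → Fin n → ℝ)
    (hx : ∀ t, HasDerivAt x (A t *ᵥ x t + f t) t)
    (hxb : ∑ j, F j *ᵥ x (ts j) = α)
    (hy : ∀ t, HasDerivAt y (A t *ᵥ y t + f t) t)
    (hyb : ∑ j, F j *ᵥ y (ts j) = α) :
    x = y := by
  have hΦd : ∀ i j, Differentiable ℝ (fun s => Φ s i j) :=
    fun i j t => (hΦ t i j).differentiableAt
  have hdet : ∀ t, IsUnit (Φ t).det := fun t => (Matrix.isUnit_iff_isUnit_det _).1 (hinv t)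
  have hz : ∀ t, HasDerivAt (fun s => x s - y s) (A t *ᵥ (x t - y t)) t := by
    intro t
    have e : A t *ᵥ (x t - y t) = (A t *ᵥ x t + f t) - (A t *ᵥ y t + f t) := by
      rw [Matrix.mulVec_sub]; abel
    rw [e]
    exact (hx t).sub (hy t)
  obtain ⟨c, hc⟩ : ∃ c : ℝ → Fin n → ℝ, c = fun t => (Φ t)⁻¹ *ᵥ (x t - y t) := ⟨_, rfl⟩
  have hΦc : ∀ t, Φ t *ᵥ c t = x t - y t := by
    intro t
    rw [hc, Matrix.mulVec_mulVec, Matrix.mul_nonsing_inv _ (hdet t), Matrix.one_mulVec]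
  have hcd : ∀ i, Differentiable ℝ (fun s => c s i) := by
    intro i
    simp only [hc, Matrix.mulVec, dotProduct]
    refine Differentiable.fun_sum fun j _ => (inv_diff_aux Φ hΦd hinv i j).mul ?_
    intro t
    exact (hasDerivAt_pi.1 (hz t) j).differentiableAt
  have hc0 : ∀ t, (fun i => deriv (fun s => c s i) t) = 0 := by
    intro t
    have key : Φ t *ᵥ (fun i => deriv (fun s => c s i) t) = 0 := by
      funext i
      have e1 : HasDerivAt (fun s => (Φ s *ᵥ c s) i)
          (∑ j, ((A t * Φ t) i j * c t j + Φ t i j * deriv (fun s => c s j) t)) t := by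
        simp only [Matrix.mulVec, dotProduct]
        exact HasDerivAt.fun_sum fun j _ => (hΦ t i j).mul (hcd j t).hasDerivAt
      have e2 := hasDerivAt_pi.1 (hz t) i
      simp only [hΦc] at e1
      have e3 := e1.unique e2
      rw [Finset.sum_add_distrib, ← hΦc, Matrix.mulVec_mulVec] at e3
      simpa [Matrix.mulVec, dotProduct] using e3
    have := congrArg (fun v => (Φ t)⁻¹ *ᵥ v) key
    simpa [Matrix.mulVec_mulVec, Matrix.nonsing_inv_mul _ (hdet t)] using this
  have hconst : ∀ t, c t = c 0 := by
    intro t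
    funext i
    exact is_const_of_deriv_eq_zero (hcd i) (fun s => congrFun (hc0 s) i) t 0
  have hb : (∑ j, F j * Φ (ts j)) *ᵥ c 0 = 0 := by
    rw [Matrix.sum_mulVec]
    calc ∑ j, (F j * Φ (ts j)) *ᵥ c 0 = ∑ j, (F j *ᵥ x (ts j) - F j *ᵥ y (ts j)) := by
          refine Finset.sum_congr rfl fun j _ => ?_
          rw [← Matrix.mulVec_mulVec, ← hconst (ts j), hΦc, Matrix.mulVec_sub]
      _ = 0 := by rw [Finset.sum_sub_distrib, hxb, hyb, sub_self]
  have hc00 : c 0 = 0 := by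
    have := congrArg (fun v => (∑ j, F j * Φ (ts j))⁻¹ *ᵥ v) hb
    simpa [Matrix.mulVec_mulVec,
      Matrix.nonsing_inv_mul _ ((Matrix.isUnit_iff_isUnit_det _).1 hF)] using this
  funext t
  have := hΦc t
  rw [hconst, hc00, Matrix.mulVec_zero] at this
  exact (sub_eq_zero.1 this.symm)
end

section
/- (Theorem 1.) Let A : ℝ → Matrix (Fin n) (Fin n) ℝ and f : ℝ → (Fin n → ℝ) be continuous, let 0 = t₁ < t₂ < … < t_m = 1 with 2 ≤ m, let F₁, …, F_m be constant n×n real matrices, let α ∈ ℝⁿ, let Φ be a fundamental matrix (Φ̇ = A(t)Φ, Φ(t) invertible for all t), and suppose F = Σ_{j=1}^{m} F_j Φ(t_j) is invertible. Then there exists a unique function x : ℝ → (Fin n → ℝ) satisfying ẋ(t) = A(t)x(t) + f(t) for all t and Σ_{j=1}^{m} F_j x(t_j) = α. -/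
open scoped Matrix

lemma aux_mul (g h : ℝ → ℝ) (t : ℝ) (hg : ContinuousAt g t) (h0 : h t = 0)
    (hh : HasDerivAt h 0 t) : HasDerivAt (fun s => g s * h s) 0 t := by
  rw [hasDerivAt_iff_tendsto_slope] at hh ⊢
  have h2 := (hg.tendsto.mono_left (nhdsWithin_le_nhds (s := {t}ᶜ))).mul hh
  rw [mul_zero] at h2
  refine h2.congr fun s => ?_
  simp only [slope_def_field, h0]
  ring

lemma aux_cont (n : ℕ) (Φ : ℝ → Matrix (Fin n) (Fin n) ℝ) (hc : Continuous Φ)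
    (hinv : ∀ t, IsUnit (Φ t)) : Continuous (fun t => (Φ t)⁻¹) := by
  have : (fun t => (Φ t)⁻¹) = fun t => ((Φ t).det)⁻¹ • (Φ t).adjugate := by
    funext t
    rw [Matrix.inv_def, Ring.inverse_eq_inv']
  rw [this]
  refine Continuous.smul (Continuous.inv₀ hc.matrix_det fun t => ?_) hc.matrix_adjugate
  exact ((Matrix.isUnit_iff_isUnit_det _).1 (hinv t)).ne_zero

lemma aux_deriv (n : ℕ) (A Φ : ℝ → Matrix (Fin n) (Fin n) ℝ)
    (hΦ : ∀ t i j, HasDerivAt (fun s => Φ s i j) ((A t * Φ t) i j) t)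
    (y : ℝ → Fin n → ℝ) (y' : Fin n → ℝ) (t : ℝ) (hy : HasDerivAt y y' t) :
    HasDerivAt (fun s => Φ s *ᵥ y s) (A t *ᵥ (Φ t *ᵥ y t) + Φ t *ᵥ y') t := by
  rw [hasDerivAt_pi] at hy ⊢
  intro i
  have := HasDerivAt.fun_sum (u := Finset.univ) fun j _ => (hΦ t i j).mul (hy j)
  convert this using 1
  · funext s
    rfl
  · rw [Finset.sum_add_distrib, Matrix.mulVec_mulVec]
    rfl

lemma aux_const (n : ℕ) (A Φ : ℝ → Matrix (Fin n) (Fin n) ℝ)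
    (hΦ : ∀ t i j, HasDerivAt (fun s => Φ s i j) ((A t * Φ t) i j) t)
    (hc : Continuous (fun t => (Φ t)⁻¹)) (hinv : ∀ t, IsUnit (Φ t))
    (y : ℝ → Fin n → ℝ) (hy : ∀ t, HasDerivAt y (A t *ᵥ y t) t) :
    ∃ c, ∀ t, y t = Φ t *ᵥ c := by
  have hd : ∀ t, IsUnit (Φ t).det := fun t => (Matrix.isUnit_iff_isUnit_det _).1 (hinv t)
  have key : ∀ t, HasDerivAt (fun s => (Φ s)⁻¹ *ᵥ y s) 0 t := by
    intro t
    set c := (Φ t)⁻¹ *ᵥ y t with hcdef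
    have hΦc : Φ t *ᵥ c = y t := by
      rw [hcdef, Matrix.mulVec_mulVec, Matrix.mul_nonsing_inv _ (hd t), Matrix.one_mulVec]
    have hw : HasDerivAt (fun s => y s - Φ s *ᵥ c) 0 t := by
      have := (hy t).sub (aux_deriv n A Φ hΦ (fun _ => c) 0 t (hasDerivAt_const _ _))
      convert this using 1
      all_goals first | rfl | simp [hΦc]
    have hv : HasDerivAt (fun s => (Φ s)⁻¹ *ᵥ (y s - Φ s *ᵥ c)) 0 t := by
      rw [hasDerivAt_pi] at hw ⊢
      intro i
      have := HasDerivAt.fun_sum (u := Finset.univ) fun j _ =>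
        aux_mul (fun s => (Φ s)⁻¹ i j) _ t (hc.matrix_elem i j).continuousAt
          (by simp [hΦc]) (hw j)
      convert this using 1
      all_goals first | rfl | simp
    have := hv.add_const c
    refine this.congr_of_eventuallyEq (Filter.Eventually.of_forall fun s => ?_)
    simp only [Matrix.mulVec_sub, Matrix.mulVec_mulVec, Matrix.nonsing_inv_mul _ (hd s),
      Matrix.one_mulVec, sub_add_cancel]
  refine ⟨(Φ 0)⁻¹ *ᵥ y 0, fun t => ?_⟩
  have := is_const_of_deriv_eq_zero (fun t => (key t).differentiableAt)
    (fun t => (key t).deriv) t 0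
  rw [← this, Matrix.mulVec_mulVec, Matrix.mul_nonsing_inv _ (hd t), Matrix.one_mulVec]

/-- Theorem 1: under the condition that `F = Σ_j F_j Φ(t_j)` is invertible, the many-point
boundary value problem `ẋ = A(t)x + f(t)`, `Σ_j F_j x(t_j) = α` has a unique solution. -/
theorem stmt_8 (n m : ℕ) (hm : 2 ≤ m)
    (A : ℝ → Matrix (Fin n) (Fin n) ℝ) (f : ℝ → Fin n → ℝ)
    (hA : Continuous A) (hf : Continuous f)
    (ts : Fin m → ℝ) (hmono : StrictMono ts)
    (h0 : ts ⟨0, by omega⟩ = 0) (h1 : ts ⟨m - 1, by omega⟩ = 1)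
    (F : Fin m → Matrix (Fin n) (Fin n) ℝ)
    (α : Fin n → ℝ)
    (Φ : ℝ → Matrix (Fin n) (Fin n) ℝ)
    (hΦ : ∀ t i j, HasDerivAt (fun s => Φ s i j) ((A t * Φ t) i j) t)
    (hinv : ∀ t, IsUnit (Φ t))
    (hF : IsUnit (∑ j, F j * Φ (ts j))) :
    ∃! x : ℝ → Fin n → ℝ,
      (∀ t, HasDerivAt x (A t *ᵥ x t + f t) t) ∧ ∑ j, F j *ᵥ x (ts j) = α := by

  have hd : ∀ t, IsUnit (Φ t).det := fun t => (Matrix.isUnit_iff_isUnit_det _).1 (hinv t)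
  have hΦc : Continuous Φ := continuous_matrix fun i j =>
    continuous_iff_continuousAt.2 fun t => (hΦ t i j).continuousAt
  have hc := aux_cont n Φ hΦc hinv
  have hg : Continuous (fun s => (Φ s)⁻¹ *ᵥ f s) := hc.matrix_mulVec hf
  set M := ∑ j, F j * Φ (ts j) with hM
  have hMd : IsUnit M.det := (Matrix.isUnit_iff_isUnit_det _).1 hF
  have hMv : ∀ c, ∑ j, F j *ᵥ (Φ (ts j) *ᵥ c) = M *ᵥ c := by
    intro c
    rw [hM, Matrix.sum_mulVec]
    simp [Matrix.mulVec_mulVec]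
  set I : ℝ → Fin n → ℝ := fun t => ∫ s in (0:ℝ)..t, (Φ s)⁻¹ *ᵥ f s with hI
  have hId : ∀ t, HasDerivAt I ((Φ t)⁻¹ *ᵥ f t) t := fun t =>
    intervalIntegral.integral_hasDerivAt_right (hg.intervalIntegrable _ _)
      (hg.stronglyMeasurableAtFilter _ _) hg.continuousAt
  set c := M⁻¹ *ᵥ (α - ∑ j, F j *ᵥ (Φ (ts j) *ᵥ I (ts j))) with hcdef
  refine ⟨fun t => Φ t *ᵥ (c + I t), ⟨fun t => ?_, ?_⟩, ?_⟩
  · have := aux_deriv n A Φ hΦ (fun t => c + I t) _ t ((hId t).const_add c)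
    rwa [Matrix.mulVec_mulVec (f t), Matrix.mul_nonsing_inv _ (hd t), Matrix.one_mulVec] at this
  · simp only [Matrix.mulVec_add, Finset.sum_add_distrib, hMv]
    rw [hcdef, Matrix.mulVec_mulVec, Matrix.mul_nonsing_inv _ hMd, Matrix.one_mulVec,
      sub_add_cancel]
  · rintro y ⟨hy, hyα⟩
    have hx : ∀ t, HasDerivAt (fun t => Φ t *ᵥ (c + I t)) (A t *ᵥ (Φ t *ᵥ (c + I t)) + f t) t := by
      intro t
      have := aux_deriv n A Φ hΦ (fun t => c + I t) _ t ((hId t).const_add c)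
      rwa [Matrix.mulVec_mulVec (f t), Matrix.mul_nonsing_inv _ (hd t), Matrix.one_mulVec] at this
    have hxα : ∑ j, F j *ᵥ (Φ (ts j) *ᵥ (c + I (ts j))) = α := by
      simp only [Matrix.mulVec_add, Finset.sum_add_distrib, hMv]
      rw [hcdef, Matrix.mulVec_mulVec, Matrix.mul_nonsing_inv _ hMd, Matrix.one_mulVec,
        sub_add_cancel]
    obtain ⟨d, hdd⟩ := aux_const n A Φ hΦ hc hinv (fun t => y t - Φ t *ᵥ (c + I t)) (by
      intro t
      have := (hy t).sub (hx t)
      rw [add_sub_add_right_eq_sub, ← Matrix.mulVec_sub] at this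
      exact this)
    have hMd0 : M *ᵥ d = 0 := by
      rw [← hMv]
      simp only [← hdd]
      simp only [Matrix.mulVec_sub, Finset.sum_sub_distrib, hyα, hxα, sub_self]
    have hd0 : d = 0 := by
      have : M⁻¹ *ᵥ (M *ᵥ d) = d := by
        rw [Matrix.mulVec_mulVec, Matrix.nonsing_inv_mul _ hMd, Matrix.one_mulVec]
      rw [← this, hMd0, Matrix.mulVec_zero]
    funext t
    have := hdd t
    rw [hd0, Matrix.mulVec_zero] at this
    exact sub_eq_zero.1 this
end
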